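/- Let 1 < p < ∞ and let ℓ^{p,∞} be the Banach lattice of real sequences a = (a_i)_{i∈ℕ} with finite norm ‖a‖_{p,∞} = sup{|I|^{(1/p)−1} Σ_{i∈I} |a_i| : I ⊆ ℕ finite, nonempty}, ordered coordinatewise. Let X = (⊕_{ℕ} ℓ^{p,∞})_∞ be the Banach lattice of bounded sequences of elements of ℓ^{p,∞} with the supremum norm and coordinatewise order; X satisfies an upper p-estimate with constant 1. Let (S_j)_{j∈ℕ} be an enumeration of the Schreier family 𝒮 = {S ⊆ ℕ : |S| ≤ min S}, and define T : ℓ^{p,∞} → X by T a = (a·χ_{S_j})_{j∈ℕ}. Then T is a vector lattice homomorphism which is an isomorphism onto its closed range Y = T(ℓ^{p,∞}), and there is no bounded linear projection from X onto Y. Consequently, there exists a Banach lattice X with an upper p-estimate and an uncomplemented closed sublattice Y of X lattice isomorphic to ℓ^{p,∞}; in particular, ℓ^{p,∞} is not injective in the class of Banach lattices with upper p-estimates. -/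

import Mathlib

noncomputable section

/-- The set of values whose supremum is the weak-`ℓ^p` norm
`‖a‖_{p,∞} = sup {|I|^{1/p−1} Σ_{i∈I} |a_i| : I ⊆ ℕ finite nonempty}`. -/
def wSeqSet (p : ℝ) (a : ℕ → ℝ) : Set ℝ :=
  {r : ℝ | ∃ I : Finset ℕ, I.Nonempty ∧
    r = (I.card : ℝ) ^ (1/p - 1) * ∑ i ∈ I, |a i|}

/-- The weak-`ℓ^p` norm of a sequence. -/
def wSeqNorm (p : ℝ) (a : ℕ → ℝ) : ℝ := sSup (wSeqSet p a)

/-- Membership in `ℓ^{p,∞}`: the weak norm is finite. -/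
def MemWp (p : ℝ) (a : ℕ → ℝ) : Prop := BddAbove (wSeqSet p a)

/-- The set of values whose supremum is the norm of `X = (⊕_ℕ ℓ^{p,∞})_∞`. -/
def XSeqSet (p : ℝ) (x : ℕ → ℕ → ℝ) : Set ℝ := {r : ℝ | ∃ j : ℕ, r = wSeqNorm p (x j)}

/-- The norm of `X = (⊕_ℕ ℓ^{p,∞})_∞`: the supremum over `j` of the weak norms of the
columns. -/
def XSeqNorm (p : ℝ) (x : ℕ → ℕ → ℝ) : ℝ := sSup (XSeqSet p x)

/-- Membership in `X = (⊕_ℕ ℓ^{p,∞})_∞`. -/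
def MemX (p : ℝ) (x : ℕ → ℕ → ℝ) : Prop :=
  (∀ j, MemWp p (x j)) ∧ BddAbove (XSeqSet p x)

/-- The Schreier family `{S ⊆ ℕ : |S| ≤ min S}` (with indices shifted by one, as the paper's
`ℕ` starts at `1`). -/
def Schreier : Set (Finset ℕ) := {S | ∀ n ∈ S, S.card ≤ n + 1}

/-- The lattice embedding `T : ℓ^{p,∞} → X`, `T a = (a·χ_{S_j})_j`, associated to an
enumeration `(S_j)` of the Schreier family. -/
def Tmap (SJ : ℕ → Finset ℕ) (a : ℕ → ℝ) : ℕ → ℕ → ℝ :=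
  fun j i => if i ∈ SJ j then a i else 0

/-!
*Embedding.* Every finite `I ⊆ ℕ` contains a Schreier set `J` with `|I \ J| ≤ |I| / 2`. Iterating
inside `I \ J` gives a geometric series, so the sums over Schreier sets alone control the weak norm.

*No projection.* A bounded projection onto the range of `T` would give a bounded linear `Q` with
`Q ∘ T = id`. For `i : ℕ`, restricting `Q` to the elements of `X` living in coordinate `i` and
reading off coordinate `i` gives a bounded finitely additive measure `μ_i` on the set of column
indices, of mass one on `{j | i ∈ S_j}`. Such `S_j` have at most `i + 1` elements, so they cannot
meet many disjoint intervals: hence for some `m` and all `n ≥ m`, the `j` for which `S_j` misses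
`(m, n]` carry `μ_i`-mass at least `1/2`. A gliding hump along a sparse set of `N` indices `i`
makes these sets of columns pairwise disjoint. A combination of their indicators with signs then
has norm one in `X`, while for suitable signs its image under `Q` has `ℓ¹`-norm at least `N / 2`
on the `N` indices, which for large `N` exceeds `‖Q‖ * N ^ (1 - 1/p)`.
-/

/-! ### Weak norm bounds -/

/-- The inequality `‖a‖_{p,∞} ≤ C`, stated without division or suprema, for an arbitrary
sequence `a`; see `wpBound_iff`. -/
def WpBound (p C : ℝ) (a : ℕ → ℝ) : Prop :=
  ∀ I : Finset ℕ, ∑ i ∈ I, |a i| ≤ C * (I.card : ℝ) ^ (1 - 1/p)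

section WpBound

variable {p C D : ℝ} {a b : ℕ → ℝ}

lemma WpBound.abs_le (h : WpBound p C a) (i : ℕ) : |a i| ≤ C := by
  simpa using h {i}

lemma WpBound.nonneg (h : WpBound p C a) : 0 ≤ C :=
  (abs_nonneg _).trans (h.abs_le 0)

lemma WpBound.mono (h : WpBound p C a) (hCD : C ≤ D) : WpBound p D a := fun I =>
  (h I).trans (by gcongr)

lemma WpBound.of_abs_le_abs (h : WpBound p C b) (hab : ∀ i, |a i| ≤ |b i|) : WpBound p C a :=
  fun I => (Finset.sum_le_sum fun i _ => hab i).trans (h I)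

lemma wpBound_zero (p : ℝ) : WpBound p 0 0 := fun I => by simp

lemma WpBound.add (ha : WpBound p C a) (hb : WpBound p D b) : WpBound p (C + D) (a + b) :=
  fun I => calc
    ∑ i ∈ I, |a i + b i| ≤ ∑ i ∈ I, |a i| + ∑ i ∈ I, |b i| := by
      rw [← Finset.sum_add_distrib]
      exact Finset.sum_le_sum fun i _ => abs_add_le _ _
    _ ≤ (C + D) * (I.card : ℝ) ^ (1 - 1/p) := by
      rw [add_mul]
      exact add_le_add (ha I) (hb I)

lemma WpBound.const_smul (c : ℝ) (ha : WpBound p C a) : WpBound p (|c| * C) (c • a) := fun I => by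
  simp only [Pi.smul_apply, smul_eq_mul, abs_mul, ← Finset.mul_sum, mul_assoc]
  exact mul_le_mul_of_nonneg_left (ha I) (abs_nonneg c)

lemma wpBound_single (hp : 1 ≤ p) (i : ℕ) (c : ℝ) : WpBound p |c| (Pi.single i c) := fun I => by
  have hθ : 0 ≤ 1 - 1/p := sub_nonneg.2 (div_le_one_of_le₀ hp (by positivity))
  by_cases hi : i ∈ I
  · have hcard : (1 : ℝ) ≤ I.card := by exact_mod_cast Finset.card_pos.2 ⟨i, hi⟩
    calc ∑ n ∈ I, |(Pi.single i c : ℕ → ℝ) n| = |c| := by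
          rw [Finset.sum_eq_single_of_mem i hi fun n _ hn => by simp [hn], Pi.single_eq_same]
      _ ≤ |c| * (I.card : ℝ) ^ (1 - 1/p) :=
          le_mul_of_one_le_right (abs_nonneg c) (Real.one_le_rpow hcard hθ)
  · rw [Finset.sum_eq_zero fun n hn => by simp [ne_of_mem_of_not_mem hn hi]]
    positivity

lemma wpBound_iff_mem_upperBounds : WpBound p C a ↔ C ∈ upperBounds (wSeqSet p a) := by
  have scale {I : Finset ℕ} (hI : I.Nonempty) :
      (I.card : ℝ) ^ (1/p - 1) * ∑ i ∈ I, |a i| ≤ C ↔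
        ∑ i ∈ I, |a i| ≤ C * (I.card : ℝ) ^ (1 - 1/p) := by
    have hcard : (0 : ℝ) < I.card := by exact_mod_cast hI.card_pos
    rw [← neg_sub, Real.rpow_neg hcard.le, inv_mul_le_iff₀ (by positivity), mul_comm C]
  constructor
  · rintro h _ ⟨I, hI, rfl⟩
    exact (scale hI).2 (h I)
  · intro h I
    rcases I.eq_empty_or_nonempty with rfl | hI
    · have hC : 0 ≤ C :=
        (abs_nonneg (a 0)).trans (h ⟨{0}, Finset.singleton_nonempty 0, by simp⟩)
      rw [Finset.sum_empty]
      positivity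
    · exact (scale hI).1 (h ⟨I, hI, rfl⟩)

lemma mem_upperBounds_iff_bddAbove_and_csSup_le {α : Type*} [ConditionallyCompleteLattice α]
    {s : Set α} (hs : s.Nonempty) {c : α} : c ∈ upperBounds s ↔ BddAbove s ∧ sSup s ≤ c :=
  ⟨fun h => ⟨⟨c, h⟩, csSup_le hs h⟩, fun h => (isLUB_le_iff (isLUB_csSup hs h.1)).1 h.2⟩

lemma wpBound_iff : WpBound p C a ↔ MemWp p a ∧ wSeqNorm p a ≤ C :=
  wpBound_iff_mem_upperBounds.trans <|
    mem_upperBounds_iff_bddAbove_and_csSup_le (s := wSeqSet p a)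
      ⟨_, {0}, Finset.singleton_nonempty 0, rfl⟩

lemma MemWp.wpBound (h : MemWp p a) : WpBound p (wSeqNorm p a) a := wpBound_iff.2 ⟨h, le_rfl⟩

end WpBound

section MemX

variable {p C : ℝ} {x : ℕ → ℕ → ℝ}

lemma forall_wpBound_iff : (∀ j, WpBound p C (x j)) ↔ MemX p x ∧ XSeqNorm p x ≤ C := by
  have columns : (∀ j, wSeqNorm p (x j) ≤ C) ↔ C ∈ upperBounds (XSeqSet p x) := by
    simp only [XSeqSet, mem_upperBounds, Set.mem_ofPred_eq, forall_exists_index,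
      forall_eq_apply_imp_iff]
  simp only [wpBound_iff, forall_and, columns, MemX, XSeqNorm, and_assoc,
    mem_upperBounds_iff_bddAbove_and_csSup_le (s := XSeqSet p x) ⟨_, 0, rfl⟩]

lemma MemX.wpBound (h : MemX p x) : ∀ j, WpBound p (XSeqNorm p x) (x j) :=
  forall_wpBound_iff.2 ⟨h, le_rfl⟩

lemma memX_of_wpBound (h : ∀ j, WpBound p C (x j)) : MemX p x :=
  (forall_wpBound_iff.1 h).1

lemma xSeqNorm_le_of_wpBound (h : ∀ j, WpBound p C (x j)) : XSeqNorm p x ≤ C :=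
  (forall_wpBound_iff.1 h).2

/-- The vector space `X = (⊕_ℕ ℓ^{p,∞})_∞`, as a subspace of all double sequences. -/
def xSubmodule (p : ℝ) : Submodule ℝ (ℕ → ℕ → ℝ) where
  carrier := {x | MemX p x}
  zero_mem' := memX_of_wpBound fun _ => wpBound_zero p
  add_mem' hx hy := memX_of_wpBound fun j => (hx.wpBound j).add (hy.wpBound j)
  smul_mem' c _ hx := memX_of_wpBound fun j => (hx.wpBound j).const_smul c

end MemX

/-! ### The upper `p`-estimate -/

lemma sum_mul_rpow_le_rpow_sum_mul_rpow_sum {ι : Type*} {p : ℝ} (hp : 1 < p) (s : Finset ι)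
    {u v : ι → ℝ} (hu : ∀ k ∈ s, 0 ≤ u k) (hv : ∀ k ∈ s, 0 ≤ v k) :
    ∑ k ∈ s, u k * v k ^ (1 - 1/p) ≤ (∑ k ∈ s, u k ^ p) ^ (1/p) * (∑ k ∈ s, v k) ^ (1 - 1/p) := by
  have hθ : 0 < 1 - 1/p := sub_pos.2 ((div_lt_one (zero_lt_one.trans hp)).2 hp)
  have hpq : p.HolderConjugate (1 - 1/p)⁻¹ := Real.holderConjugate_iff.2 ⟨hp, by simp⟩
  have hpow : ∀ k ∈ s, (v k ^ (1 - 1/p)) ^ (1 - 1/p)⁻¹ = v k := fun k hk =>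
    Real.rpow_rpow_inv (hv k hk) hθ.ne'
  simpa only [Finset.sum_congr rfl hpow, one_div (1 - 1/p)⁻¹, inv_inv] using
    Real.inner_le_Lp_mul_Lq_of_nonneg s hpq hu fun k hk => Real.rpow_nonneg (hv k hk) (1 - 1/p)

lemma WpBound.sup'_abs {ι : Type*} {p : ℝ} (hp : 1 < p) {s : Finset ι} (hs : s.Nonempty)
    {x : ι → ℕ → ℝ} {C : ι → ℝ} (h : ∀ k ∈ s, WpBound p (C k) (x k)) :
    WpBound p ((∑ k ∈ s, C k ^ p) ^ (1 / p)) (fun i => s.sup' hs fun k => |x k i|) := by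
  classical
  intro I
  choose f hfs hf using fun i => s.exists_mem_eq_sup' hs fun k => |x k i|
  have hfiber : ∀ k ∈ s, ∑ i ∈ I with f i = k, |x (f i) i| ≤
      C k * ((I.filter (f · = k)).card : ℝ) ^ (1 - 1/p) := fun k hk => by
    rw [Finset.sum_congr rfl fun i hi => by rw [(Finset.mem_filter.1 hi).2]]
    exact h k hk _
  have hcard : ∑ k ∈ s, ((I.filter (f · = k)).card : ℝ) = I.card := by
    exact_mod_cast (Finset.card_eq_sum_card_fiberwise fun i _ => hfs i).symm
  calc ∑ i ∈ I, |s.sup' hs (fun k => |x k i|)|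
      = ∑ k ∈ s, ∑ i ∈ I with f i = k, |x (f i) i| := by
        simp only [hf, abs_abs, Finset.sum_fiberwise_of_maps_to fun i _ => hfs i]
    _ ≤ ∑ k ∈ s, C k * ((I.filter (f · = k)).card : ℝ) ^ (1 - 1/p) := Finset.sum_le_sum hfiber
    _ ≤ (∑ k ∈ s, C k ^ p) ^ (1/p) * (I.card : ℝ) ^ (1 - 1/p) := by
        rw [← hcard]
        exact sum_mul_rpow_le_rpow_sum_mul_rpow_sum hp s (fun k hk => (h k hk).nonneg)
          fun _ _ => Nat.cast_nonneg _

/-! ### The Schreier embedding -/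

lemma singleton_mem_schreier (i : ℕ) : {i} ∈ Schreier := fun n _ => by simp

lemma exists_subset_schreier_card_sdiff (I : Finset ℕ) :
    ∃ J ⊆ I, J ∈ Schreier ∧ (I \ J).card = I.card / 2 := by
  have hsmall : (I.filter (¬ I.card / 2 ≤ ·)).card ≤ I.card / 2 := by
    calc (I.filter (¬ I.card / 2 ≤ ·)).card ≤ (Finset.range (I.card / 2)).card :=
          Finset.card_le_card fun i hi => by simpa using (Finset.mem_filter.1 hi).2
      _ = I.card / 2 := Finset.card_range _
  have hlarge : I.card - I.card / 2 ≤ (I.filter (I.card / 2 ≤ ·)).card := by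
    have := I.card_filter_add_card_filter_not (I.card / 2 ≤ ·)
    omega
  obtain ⟨J, hJ, hJcard⟩ := Finset.exists_subset_card_eq hlarge
  have hJI : J ⊆ I := hJ.trans (Finset.filter_subset _ _)
  refine ⟨J, hJI, fun n hn => ?_, ?_⟩
  · have := (Finset.mem_filter.1 (hJ hn)).2
    omega
  · rw [Finset.card_sdiff_of_subset hJI]
    omega

/-- The lower bound `1 - 2 ^ (-(1 - 1/p))` for the embedding `Tmap`: its inverse is the sum of the
geometric series produced by repeatedly removing a Schreier subset of half the size. -/
def schreierConst (p : ℝ) : ℝ := 1 - (1/2) ^ (1 - 1/p)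

lemma schreierConst_pos {p : ℝ} (hp : 1 < p) : 0 < schreierConst p :=
  sub_pos.2 <| Real.rpow_lt_one (by norm_num) (by norm_num) <|
    sub_pos.2 ((div_lt_one (zero_lt_one.trans hp)).2 hp)

lemma wpBound_of_forall_schreier {p : ℝ} (hp : 1 < p) {C : ℝ} {a : ℕ → ℝ}
    (h : ∀ S ∈ Schreier, ∑ i ∈ S, |a i| ≤ C * (S.card : ℝ) ^ (1 - 1 / p)) :
    WpBound p (C / schreierConst p) a := by
  have hθ : 0 < 1 - 1/p := sub_pos.2 ((div_lt_one (zero_lt_one.trans hp)).2 hp)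
  have hc := schreierConst_pos hp
  have hC : 0 ≤ C :=
    (abs_nonneg (a 0)).trans (by simpa using h {0} (singleton_mem_schreier 0))
  intro I
  induction hn : I.card using Nat.strong_induction_on generalizing I with
  | _ n ih =>
    rcases Nat.eq_zero_or_pos n with rfl | hpos
    · rw [Finset.card_eq_zero.1 hn, Finset.sum_empty]
      positivity
    obtain ⟨J, hJI, hJ, hcard⟩ := exists_subset_schreier_card_sdiff I
    rw [hn] at hcard
    have hhalf : ((n / 2 : ℕ) : ℝ) ≤ 1/2 * n := by
      rw [one_div_mul_eq_div]
      exact Nat.cast_div_le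
    have hJn : J.card ≤ n := hn ▸ Finset.card_le_card hJI
    calc ∑ i ∈ I, |a i| = ∑ i ∈ I \ J, |a i| + ∑ i ∈ J, |a i| := (Finset.sum_sdiff hJI).symm
      _ ≤ C / schreierConst p * ((n / 2 : ℕ) : ℝ) ^ (1 - 1/p) + C * (J.card : ℝ) ^ (1 - 1/p) :=
          add_le_add (ih (n / 2) (by omega) _ hcard) (h J hJ)
      _ ≤ C / schreierConst p * (1/2 * n : ℝ) ^ (1 - 1/p) + C * (n : ℝ) ^ (1 - 1/p) := by gcongr
      _ = C / schreierConst p * ((1/2) ^ (1 - 1/p) + schreierConst p) * (n : ℝ) ^ (1 - 1/p) := by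
          rw [Real.mul_rpow (by norm_num) (Nat.cast_nonneg n)]
          field_simp
      _ = C / schreierConst p * (n : ℝ) ^ (1 - 1/p) := by simp [schreierConst]

section Tmap

variable (SJ : ℕ → Finset ℕ)

lemma Tmap_add (a b : ℕ → ℝ) : Tmap SJ (a + b) = Tmap SJ a + Tmap SJ b := by
  ext j i
  by_cases hi : i ∈ SJ j <;> simp [Tmap, hi]

lemma Tmap_smul (c : ℝ) (a : ℕ → ℝ) : Tmap SJ (c • a) = c • Tmap SJ a := by
  ext j i
  simp [Tmap]

lemma Tmap_sup (a b : ℕ → ℝ) : Tmap SJ (a ⊔ b) = Tmap SJ a ⊔ Tmap SJ b := by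
  ext j i
  by_cases hi : i ∈ SJ j <;> simp [Tmap, hi]

variable {SJ} {p C : ℝ} {a : ℕ → ℝ}

lemma wpBound_Tmap (h : WpBound p C a) (j : ℕ) : WpBound p C (Tmap SJ a j) :=
  h.of_abs_le_abs fun i => by by_cases hi : i ∈ SJ j <;> simp [Tmap, hi]

lemma MemWp.memX_Tmap (h : MemWp p a) : MemX p (Tmap SJ a) :=
  memX_of_wpBound (wpBound_Tmap h.wpBound)

lemma wpBound_of_wpBound_Tmap (hp : 1 < p) (hSJ : Schreier ⊆ Set.range SJ)
    (h : ∀ j, WpBound p C (Tmap SJ a j)) : WpBound p (C / schreierConst p) a := by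
  refine wpBound_of_forall_schreier hp fun S hS => ?_
  obtain ⟨j, rfl⟩ := hSJ hS
  calc ∑ i ∈ SJ j, |a i| = ∑ i ∈ SJ j, |Tmap SJ a j i| :=
        Finset.sum_congr rfl fun i hi => by simp [Tmap, hi]
    _ ≤ C * ((SJ j).card : ℝ) ^ (1 - 1/p) := h j (SJ j)

lemma schreierConst_mul_wSeqNorm_le (hp : 1 < p) (hSJ : Schreier ⊆ Set.range SJ)
    (ha : MemWp p a) : schreierConst p * wSeqNorm p a ≤ XSeqNorm p (Tmap SJ a) := by
  rw [← le_div_iff₀' (schreierConst_pos hp)]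
  exact (wpBound_iff.1 (wpBound_of_wpBound_Tmap hp hSJ ha.memX_Tmap.wpBound)).2

end Tmap

/-! ### Bounded functionals on columns -/

lemma card_filter_not_disjoint_le {ι α : Type*} [DecidableEq α] (s : Finset ι) {t : ι → Finset α}
    (ht : Pairwise (Function.onFun Disjoint t)) (S : Finset α) :
    (s.filter fun k => ¬ Disjoint S (t k)).card ≤ S.card := by
  refine Finset.card_le_card_of_forall_subsingleton (fun k n => n ∈ t k) (fun k hk => ?_) ?_
  · exact Finset.not_disjoint_iff.1 (Finset.mem_filter.1 hk).2
  · rintro n - k ⟨-, hk⟩ l ⟨-, hl⟩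
    by_contra hkl
    exact Finset.disjoint_left.1 (ht hkl) hk hl

/-- The indices `j` whose set `S j` misses the interval `(m, n]`; the gliding hump argument keeps
the part of a set of columns lying in `avoiding S m n`. -/
def avoiding {α : Type*} (S : α → Finset ℕ) (m n : ℕ) : Set α :=
  {j | Disjoint (S j) (Finset.Ioc m n)}

lemma mem_avoiding {α : Type*} {S : α → Finset ℕ} {m n : ℕ} {j : α} :
    j ∈ avoiding S m n ↔ Disjoint (S j) (Finset.Ioc m n) := Iff.rfl

section Avoiding

variable {α : Type*} {S : α → Finset ℕ} {U : Set α} {N : ℕ}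

lemma sum_indicator_diff_avoiding_le (hU : ∀ j ∈ U, (S j).card ≤ N) {m : ℕ → ℕ} (hm : Monotone m)
    (s : Finset ℕ) (j : α) :
    ∑ k ∈ s, (U \ avoiding S (m k) (m (k + 1))).indicator (1 : α → ℝ) j ≤ N := by
  classical
  have hdisj : Pairwise (Function.onFun Disjoint fun k => Finset.Ioc (m k) (m (k + 1))) :=
    fun k l hkl => Finset.disjoint_coe.1 <| by
      simpa only [Finset.coe_Ioc, Function.onFun, Order.succ_eq_add_one] using
        hm.pairwise_disjoint_on_Ioc_succ hkl
  by_cases hj : j ∈ U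
  · simp only [Set.indicator_apply, Set.mem_sdiff, mem_avoiding, hj, true_and, Pi.one_apply,
      Finset.sum_boole]
    exact_mod_cast (card_filter_not_disjoint_le s hdisj (S j)).trans (hU j hj)
  · simp [hj]

lemma exists_forall_le_map_indicator_inter_avoiding (hU : ∀ j ∈ U, (S j).card ≤ N)
    (φ : (α → ℝ) →ₗ[ℝ] ℝ) {K : ℝ} (hφ : ∀ f C, (∀ j, |f j| ≤ C) → φ f ≤ K * C)
    {δ : ℝ} (hδ : δ < φ (U.indicator 1)) (i : ℕ) :
    ∃ m ≥ i, ∀ n ≥ m, δ ≤ φ ((U ∩ avoiding S m n).indicator 1) := by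
  by_contra! hcon
  choose! next hnext hlt using hcon
  let m : ℕ → ℕ := fun k => next^[k] i
  have hm_succ (k : ℕ) : m (k + 1) = next (m k) := Function.iterate_succ_apply' next k i
  have hm_ge (k : ℕ) : i ≤ m k := by
    induction k with
    | zero => exact le_rfl
    | succ k ih => exact ih.trans (hm_succ k ▸ hnext _ ih)
  have hm : Monotone m := monotone_nat_of_le_succ fun k => hm_succ k ▸ hnext _ (hm_ge k)
  let W (k : ℕ) : Set α := U \ avoiding S (m k) (m (k + 1))
  have hgap (k : ℕ) : φ (U.indicator 1) - δ ≤ φ ((W k).indicator 1) := by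
    have hsplit : U.indicator (1 : α → ℝ) =
        (U ∩ avoiding S (m k) (m (k + 1))).indicator 1 + (W k).indicator 1 := by
      conv_lhs => rw [← Set.inter_union_sdiff U (avoiding S (m k) (m (k + 1)))]
      exact Set.indicator_union_of_disjoint Set.disjoint_sdiff_inter.symm 1
    have hsmall := hlt (m k) (hm_ge k)
    rw [← hm_succ] at hsmall
    rw [hsplit, map_add]
    linarith
  obtain ⟨L, hL⟩ := exists_lt_nsmul (sub_pos.2 hδ) (K * N)
  refine hL.not_ge ?_
  calc L • (φ (U.indicator 1) - δ) ≤ ∑ k ∈ Finset.range L, φ ((W k).indicator 1) := by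
        simpa using Finset.card_nsmul_le_sum (Finset.range L) _ _ fun k _ => hgap k
    _ = φ (∑ k ∈ Finset.range L, (W k).indicator 1) := (map_sum φ _ _).symm
    _ ≤ K * N := hφ _ _ fun j => by
        rw [Finset.sum_apply, abs_of_nonneg
          (Finset.sum_nonneg fun k _ => Set.indicator_nonneg (fun _ _ => zero_le_one) j)]
        exact sum_indicator_diff_avoiding_le hU hm _ j

lemma pairwiseDisjoint_inter_avoiding {s : Finset ℕ} {g : ℕ → ℕ}
    (hs : ∀ i ∈ s, ∀ k ∈ s, i < k → g i < k) {n : ℕ} (hn : ∀ i ∈ s, i ≤ n) :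
    (s : Set ℕ).PairwiseDisjoint fun i => {j | i ∈ S j} ∩ avoiding S (g i) n := by
  have hlt : ∀ i ∈ s, ∀ k ∈ s, i < k → Disjoint ({j | i ∈ S j} ∩ avoiding S (g i) n)
      ({j | k ∈ S j} ∩ avoiding S (g k) n) := fun i hi k hk hik =>
    Set.disjoint_left.2 fun j hji hjk =>
      Finset.disjoint_left.1 hji.2 hjk.1 (Finset.mem_Ioc.2 ⟨hs i hi k hk hik, hn k hk⟩)
  intro i hi k hk hik
  rcases lt_or_gt_of_ne hik with h | h
  · exact hlt i hi k hk h
  · exact (hlt k hk i hi h).symm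

end Avoiding

/-! ### There is no bounded left inverse -/

lemma exists_signs_sum_diag_le {ι : Type*} (M : ι → ι → ℝ) (s : Finset ι) :
    ∃ ε : ι → ℝ, (∀ i, |ε i| = 1) ∧ ∑ i ∈ s, M i i ≤ ∑ i ∈ s, ε i * ∑ j ∈ s, ε j * M i j := by
  classical
  induction s using Finset.induction_on with
  | empty => exact ⟨fun _ => 1, by simp, by simp⟩
  | insert b s hb ih =>
    obtain ⟨ε, hε, hsum⟩ := ih
    obtain ⟨t, ht, hcross⟩ : ∃ t : ℝ, |t| = 1 ∧
        0 ≤ t * (∑ j ∈ s, ε j * M b j + ∑ i ∈ s, ε i * M i b) := by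
      rcases le_total 0 (∑ j ∈ s, ε j * M b j + ∑ i ∈ s, ε i * M i b) with h | h
      · exact ⟨1, by simp, by simpa using h⟩
      · exact ⟨-1, by simp, by linarith⟩
    have htt : t * t = 1 := by rw [← abs_mul_abs_self, ht, one_mul]
    have hupdate (F : ι → ℝ) : ∑ i ∈ s, Function.update ε b t i * F i = ∑ i ∈ s, ε i * F i :=
      Finset.sum_congr rfl fun i hi => by
        rw [Function.update_of_ne (ne_of_mem_of_not_mem hi hb)]
    refine ⟨Function.update ε b t, fun i => ?_, ?_⟩
    · rcases eq_or_ne i b with rfl | hi <;> simp [*]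
    calc ∑ i ∈ insert b s, M i i = M b b + ∑ i ∈ s, M i i := Finset.sum_insert hb
      _ ≤ t * t * M b b + t * (∑ j ∈ s, ε j * M b j + ∑ i ∈ s, ε i * M i b)
            + ∑ i ∈ s, ε i * ∑ j ∈ s, ε j * M i j := by
          rw [htt, one_mul]
          linarith
      _ = t * (t * M b b + ∑ j ∈ s, ε j * M b j)
            + ∑ i ∈ s, ε i * (t * M i b + ∑ j ∈ s, ε j * M i j) := by
          simp only [mul_add, Finset.sum_add_distrib, Finset.mul_sum, mul_left_comm t, mul_assoc]
          ring
      _ = ∑ i ∈ insert b s, Function.update ε b t i *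
            ∑ j ∈ insert b s, Function.update ε b t j * M i j := by
          simp only [Finset.sum_insert hb, hupdate, Function.update_self]

lemma exists_signs_sum_diag_le_sum_abs {ι : Type*} (M : ι → ι → ℝ) (s : Finset ι) :
    ∃ ε : ι → ℝ, (∀ i, |ε i| = 1) ∧ ∑ i ∈ s, M i i ≤ ∑ i ∈ s, |∑ j ∈ s, ε j * M i j| := by
  obtain ⟨ε, hε, hsum⟩ := exists_signs_sum_diag_le M s
  refine ⟨ε, hε, hsum.trans (Finset.sum_le_sum fun i _ => ?_)⟩
  calc ε i * ∑ j ∈ s, ε j * M i j ≤ |ε i * ∑ j ∈ s, ε j * M i j| := le_abs_self _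
    _ = |∑ j ∈ s, ε j * M i j| := by rw [abs_mul, hε, one_mul]

lemma exists_finset_card_eq_forall_lt (g : ℕ → ℕ) (N : ℕ) :
    ∃ s : Finset ℕ, s.card = N ∧ ∀ i ∈ s, ∀ k ∈ s, i < k → g i < k := by
  obtain ⟨f, -, hf⟩ := exists_seq_of_forall_finset_exists (fun _ => True)
    (fun i k : ℕ => i < k ∧ g i < k) fun s _ =>
      ⟨s.sup (fun i => max i (g i)) + 1, trivial, fun i hi => by
        have : max i (g i) ≤ s.sup fun i => max i (g i) :=
          Finset.le_sup (f := fun i => max i (g i)) hi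
        omega⟩
  have hmono : StrictMono f := fun k l hkl => (hf k l hkl).1
  refine ⟨(Finset.range N).map ⟨f, hmono.injective⟩, by simp, ?_⟩
  simp only [Finset.mem_map, Function.Embedding.coeFn_mk]
  rintro _ ⟨k, -, rfl⟩ _ ⟨l, -, rfl⟩ hkl
  exact (hf k l (hmono.lt_iff_lt.1 hkl)).2

lemma exists_nat_mul_rpow_lt_mul {θ c : ℝ} (hθ : θ < 1) (hc : 0 < c) (K : ℝ) :
    ∃ N : ℕ, K * (N : ℝ) ^ θ < c * N := by
  have hlarge := ((tendsto_rpow_atTop (sub_pos.2 hθ)).comp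
    tendsto_natCast_atTop_atTop).eventually_gt_atTop (K / c)
  obtain ⟨N, hN, hNpos⟩ := (hlarge.and (Filter.eventually_gt_atTop 0)).exists
  have hN0 : (0 : ℝ) < N := by exact_mod_cast hNpos
  refine ⟨N, ?_⟩
  calc K * (N : ℝ) ^ θ < c * (N : ℝ) ^ (1 - θ) * (N : ℝ) ^ θ := by
        gcongr
        exact (div_lt_iff₀' hc).1 hN
    _ = c * N := by rw [mul_assoc, ← Real.rpow_add hN0, sub_add_cancel, Real.rpow_one]

/-- The embedding of scalar sequences into double sequences as the `i`-th row:
`row i f j = f j • e_i`. -/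
def row (i : ℕ) : (ℕ → ℝ) →ₗ[ℝ] ℕ → ℕ → ℝ :=
  (LinearMap.single ℝ (fun _ : ℕ => ℝ) i).compLeft ℕ

@[simp]
lemma row_apply (i : ℕ) (f : ℕ → ℝ) (j : ℕ) : row i f j = Pi.single i (f j) := rfl

lemma Tmap_single_one (SJ : ℕ → Finset ℕ) (i : ℕ) :
    Tmap SJ (Pi.single i 1) = row i ({j | i ∈ SJ j}.indicator 1) := by
  ext j n
  rcases eq_or_ne n i with rfl | hn
  · simp [Tmap, Set.indicator_apply]
  · simp [Tmap, hn]

lemma wpBound_row {p C : ℝ} (hp : 1 ≤ p) (i : ℕ) {f : ℕ → ℝ} (hf : ∀ j, |f j| ≤ C) (j : ℕ) :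
    WpBound p C (row i f j) :=
  (wpBound_single hp i (f j)).mono (hf j)

lemma wpBound_sum_smul_row_indicator {p : ℝ} (hp : 1 ≤ p) {s : Finset ℕ} {A : ℕ → Set ℕ}
    (hA : (s : Set ℕ).PairwiseDisjoint A) {ε : ℕ → ℝ} (hε : ∀ i, |ε i| ≤ 1) (j : ℕ) :
    WpBound p 1 ((∑ i ∈ s, ε i • row i ((A i).indicator 1)) j) := by
  simp only [Finset.sum_apply, Pi.smul_apply, row_apply]
  by_cases hj : ∃ i ∈ s, j ∈ A i
  · obtain ⟨i, hi, hji⟩ := hj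
    rw [Finset.sum_eq_single_of_mem i hi fun k hk hki => by
      simp [Set.disjoint_left.1 (hA hi hk hki.symm) hji]]
    simpa [hji, ← Pi.single_smul] using (wpBound_single hp i (ε i)).mono (hε i)
  · push Not at hj
    rw [Finset.sum_eq_zero fun i hi => by simp [hj i hi]]
    exact (wpBound_zero p).mono zero_le_one

section LeftInverse

variable {p K : ℝ} {Q : (ℕ → ℕ → ℝ) →ₗ[ℝ] ℕ → ℝ}

lemma sum_diag_le_mul_rpow_card (hp : 1 ≤ p)
    (hQ : ∀ x C, (∀ j, WpBound p C (x j)) → WpBound p (K * C) (Q x))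
    {s : Finset ℕ} {A : ℕ → Set ℕ} (hA : (s : Set ℕ).PairwiseDisjoint A) :
    ∑ i ∈ s, Q (row i ((A i).indicator 1)) i ≤ K * (s.card : ℝ) ^ (1 - 1/p) := by
  obtain ⟨ε, hε, hdiag⟩ :=
    exists_signs_sum_diag_le_sum_abs (fun i k => Q (row k ((A k).indicator 1)) i) s
  calc ∑ i ∈ s, Q (row i ((A i).indicator 1)) i
      ≤ ∑ i ∈ s, |∑ k ∈ s, ε k * Q (row k ((A k).indicator 1)) i| := hdiag
    _ = ∑ i ∈ s, |Q (∑ k ∈ s, ε k • row k ((A k).indicator 1)) i| := by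
        simp only [map_sum, map_smul, Finset.sum_apply, Pi.smul_apply, smul_eq_mul]
    _ ≤ K * 1 * (s.card : ℝ) ^ (1 - 1/p) :=
        hQ _ 1 (wpBound_sum_smul_row_indicator hp hA fun i => (hε i).le) s
    _ = K * (s.card : ℝ) ^ (1 - 1/p) := by rw [mul_one]

variable {SJ : ℕ → Finset ℕ}

lemma exists_forall_half_le_row_indicator (hp : 1 ≤ p) (hSJ : Set.range SJ ⊆ Schreier)
    (hQ : ∀ x C, (∀ j, WpBound p C (x j)) → WpBound p (K * C) (Q x))
    (hT : ∀ a, MemWp p a → Q (Tmap SJ a) = a) (i : ℕ) :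
    ∃ m ≥ i, ∀ n ≥ m, 1/2 ≤ Q (row i (({j | i ∈ SJ j} ∩ avoiding SJ m n).indicator 1)) i := by
  let μ : (ℕ → ℝ) →ₗ[ℝ] ℝ := LinearMap.proj i ∘ₗ Q ∘ₗ row i
  have hμ (f : ℕ → ℝ) (C : ℝ) (hf : ∀ j, |f j| ≤ C) : μ f ≤ K * C :=
    (le_abs_self _).trans ((hQ _ C (wpBound_row hp i hf)).abs_le i)
  have hmass : μ ({j | i ∈ SJ j}.indicator 1) = 1 := by
    calc Q (row i ({j | i ∈ SJ j}.indicator 1)) i = (Pi.single i 1 : ℕ → ℝ) i := by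
          rw [← Tmap_single_one, hT _ (wpBound_iff.1 (wpBound_single hp i 1)).1]
      _ = 1 := Pi.single_eq_same i 1
  exact exists_forall_le_map_indicator_inter_avoiding (U := {j | i ∈ SJ j})
    (fun j hj => hSJ ⟨j, rfl⟩ i hj) μ hμ
    (by rw [hmass]; norm_num) i

lemma not_forall_map_Tmap_eq (hp : 1 < p) (hSJ : Set.range SJ ⊆ Schreier)
    (hQ : ∀ x C, (∀ j, WpBound p C (x j)) → WpBound p (K * C) (Q x)) :
    ¬ ∀ a, MemWp p a → Q (Tmap SJ a) = a := by
  intro hT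
  choose g hg hhalf using exists_forall_half_le_row_indicator hp.le hSJ hQ hT
  have hθ : 1 - 1/p < 1 := sub_lt_self 1 (by positivity)
  obtain ⟨N, hN⟩ := exists_nat_mul_rpow_lt_mul hθ one_half_pos K
  obtain ⟨s, rfl, hs⟩ := exists_finset_card_eq_forall_lt g N
  have hgn : ∀ i ∈ s, g i ≤ s.sup g := fun i hi => Finset.le_sup hi
  let A (i : ℕ) : Set ℕ := {j | i ∈ SJ j} ∩ avoiding SJ (g i) (s.sup g)
  refine hN.not_ge ?_
  calc 1/2 * (s.card : ℝ) = s.card • (1/2 : ℝ) := by rw [nsmul_eq_mul, mul_comm]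
    _ ≤ ∑ i ∈ s, Q (row i ((A i).indicator 1)) i :=
        Finset.card_nsmul_le_sum _ _ _ fun i hi => hhalf i _ (hgn i hi)
    _ ≤ K * (s.card : ℝ) ^ (1 - 1/p) := sum_diag_le_mul_rpow_card hp.le hQ
        (pairwiseDisjoint_inter_avoiding hs fun i hi => (hg i).trans (hgn i hi))

end LeftInverse

/-! ### There is no bounded projection -/

lemma exists_linearMap_eqOn {𝕜 V W : Type*} [Field 𝕜] [AddCommGroup V] [Module 𝕜 V]
    [AddCommGroup W] [Module 𝕜 W] (E : Submodule 𝕜 V) {P : V → W}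
    (hadd : ∀ x y, x ∈ E → y ∈ E → P (x + y) = P x + P y)
    (hsmul : ∀ (c : 𝕜) (x : V), x ∈ E → P (c • x) = c • P x) :
    ∃ L : V →ₗ[𝕜] W, ∀ x ∈ E, L x = P x := by
  let PE : E →ₗ[𝕜] W :=
    { toFun := fun x => P x
      map_add' := fun x y => hadd x y x.2 y.2
      map_smul' := fun c x => hsmul c x x.2 }
  obtain ⟨L, hL⟩ := PE.exists_extend
  exact ⟨L, fun x hx => DFunLike.congr_fun hL ⟨x, hx⟩⟩

/-- Recovers `a` from `Tmap SJ a`, given for each `i` a column `col i` whose set contains `i`. -/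
def decode (col : ℕ → ℕ) : (ℕ → ℕ → ℝ) →ₗ[ℝ] ℕ → ℝ :=
  LinearMap.pi fun i => LinearMap.proj i ∘ₗ LinearMap.proj (col i)

lemma decode_Tmap {SJ : ℕ → Finset ℕ} {col : ℕ → ℕ} (hcol : ∀ i, i ∈ SJ (col i)) (a : ℕ → ℝ) :
    decode col (Tmap SJ a) = a := by
  ext i
  simp [decode, Tmap, hcol i]

lemma not_exists_bounded_projection {p : ℝ} (hp : 1 < p) {SJ : ℕ → Finset ℕ}
    (hSJ : Set.range SJ = Schreier) :
    ¬ ∃ (P : (ℕ → ℕ → ℝ) → (ℕ → ℕ → ℝ)) (K : ℝ),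
        (∀ x y, MemX p x → MemX p y → P (x + y) = P x + P y) ∧
        (∀ (c : ℝ) (x : ℕ → ℕ → ℝ), MemX p x → P (c • x) = c • P x) ∧
        (∀ x, MemX p x → ∃ a : ℕ → ℝ, MemWp p a ∧ P x = Tmap SJ a) ∧
        (∀ a : ℕ → ℝ, MemWp p a → P (Tmap SJ a) = Tmap SJ a) ∧
        (∀ x, MemX p x → XSeqNorm p (P x) ≤ K * XSeqNorm p x) := by
  rintro ⟨P, K, hadd, hsmul, hrange, hfix, hbound⟩
  obtain ⟨L, hL⟩ := exists_linearMap_eqOn (xSubmodule p) hadd hsmul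
  have hmem (i : ℕ) : ∃ j, i ∈ SJ j := by
    obtain ⟨j, hj⟩ := hSJ.ge (singleton_mem_schreier i)
    exact ⟨j, by simp [hj]⟩
  choose col hcol using hmem
  refine not_forall_map_Tmap_eq (Q := decode col ∘ₗ L) (K := |K| / schreierConst p) hp hSJ.le
    (fun x C hx => ?_) fun a ha => ?_
  · have hxX := memX_of_wpBound hx
    obtain ⟨a, ha, hPx⟩ := hrange x hxX
    have hnorm : XSeqNorm p (Tmap SJ a) ≤ |K| * C := by
      calc XSeqNorm p (Tmap SJ a) ≤ K * XSeqNorm p x := hPx ▸ hbound x hxX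
        _ ≤ |K| * XSeqNorm p x :=
            mul_le_mul_of_nonneg_right (le_abs_self K) (hxX.wpBound 0).nonneg
        _ ≤ |K| * C :=
            mul_le_mul_of_nonneg_left (xSeqNorm_le_of_wpBound hx) (abs_nonneg K)
    rw [LinearMap.comp_apply, hL x hxX, hPx, decode_Tmap hcol, div_mul_eq_mul_div]
    exact wpBound_of_wpBound_Tmap hp hSJ.ge (forall_wpBound_iff.2 ⟨ha.memX_Tmap, hnorm⟩)
  · rw [LinearMap.comp_apply, hL _ ha.memX_Tmap, hfix a ha, decode_Tmap hcol]

/-- `X = (⊕_ℕ ℓ^{p,∞})_∞` is a Banach lattice with upper `p`-estimate constant one, the map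
`T a = (a·χ_{S_j})_j` (for an enumeration `(S_j)` of the Schreier family) is a vector lattice
homomorphism and an isomorphism from `ℓ^{p,∞}` onto its range `Y`, and there is no bounded
projection from `X` onto `Y`.  Hence `Y` is an uncomplemented closed sublattice of `X`
lattice isomorphic to `ℓ^{p,∞}`: `ℓ^{p,∞}` is not injective in the class of Banach lattices
with upper `p`-estimates. -/
theorem statement19 (p : ℝ) (hp : 1 < p)
    (SJ : ℕ → Finset ℕ) (hSJ : Set.range SJ = Schreier) :
    -- X satisfies an upper p-estimate with constant 1
    (∀ (m : ℕ) (x : Fin (m + 1) → ℕ → ℕ → ℝ), (∀ k, MemX p (x k)) →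
      XSeqNorm p (fun j i =>
          (Finset.univ : Finset (Fin (m + 1))).sup' Finset.univ_nonempty fun k => |x k j i|)
        ≤ (∑ k, XSeqNorm p (x k) ^ p) ^ (1/p)) ∧
    -- T maps ℓ^{p,∞} into X
    (∀ a : ℕ → ℝ, MemWp p a → MemX p (Tmap SJ a)) ∧
    -- T is a vector lattice homomorphism
    (∀ a b : ℕ → ℝ, Tmap SJ (a + b) = Tmap SJ a + Tmap SJ b) ∧
    (∀ (c : ℝ) (a : ℕ → ℝ), Tmap SJ (c • a) = c • Tmap SJ a) ∧
    (∀ a b : ℕ → ℝ, Tmap SJ (a ⊔ b) = Tmap SJ a ⊔ Tmap SJ b) ∧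
    -- T is a lattice isomorphism onto its range
    (∃ c : ℝ, 0 < c ∧ ∀ a : ℕ → ℝ, MemWp p a →
      c * wSeqNorm p a ≤ XSeqNorm p (Tmap SJ a) ∧
      XSeqNorm p (Tmap SJ a) ≤ wSeqNorm p a) ∧
    -- there is no bounded projection from X onto Y = T(ℓ^{p,∞})
    ¬ ∃ (P : (ℕ → ℕ → ℝ) → (ℕ → ℕ → ℝ)) (K : ℝ),
        (∀ x y, MemX p x → MemX p y → P (x + y) = P x + P y) ∧
        (∀ (c : ℝ) (x : ℕ → ℕ → ℝ), MemX p x → P (c • x) = c • P x) ∧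
        (∀ x, MemX p x → ∃ a : ℕ → ℝ, MemWp p a ∧ P x = Tmap SJ a) ∧
        (∀ a : ℕ → ℝ, MemWp p a → P (Tmap SJ a) = Tmap SJ a) ∧
        (∀ x, MemX p x → XSeqNorm p (P x) ≤ K * XSeqNorm p x) := by
  refine ⟨fun m x hx => ?_, fun a ha => ha.memX_Tmap, Tmap_add SJ, Tmap_smul SJ, Tmap_sup SJ,
    ⟨schreierConst p, schreierConst_pos hp, fun a ha => ⟨?_, ?_⟩⟩,
    not_exists_bounded_projection hp hSJ⟩
  · exact xSeqNorm_le_of_wpBound fun j =>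
      WpBound.sup'_abs hp Finset.univ_nonempty fun k _ => (hx k).wpBound j
  · exact schreierConst_mul_wSeqNorm_le hp hSJ.ge ha
  · exact xSeqNorm_le_of_wpBound (wpBound_Tmap ha.wpBound)
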